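/- Let f be the local rule of width 4 with code number 58336, and define g : ℤ^4 → ℤ by g(x_0,x_1,x_2,x_3) = x_1 − 1 + Θ(x_2 − x_1 − 2). Then for every strictly increasing s : ℤ → ℤ, the function t = g_{∞,1}(s) is strictly increasing and φ(t) = f_∞(φ(s)). -/

import Mathlib

/-- For a (strictly increasing) `s : ℤ → ℤ`, `phi s` is the occupancy bisequence:
`phi s i = 1` iff `i` lies in the range of `s`. -/
noncomputable def phi (s : ℤ → ℤ) (i : ℤ) : Fin 2 :=
  haveI := Classical.propDecidable (i ∈ Set.range s)
  if i ∈ Set.range s then 1 else 0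

/-- The local rule of width 4 with code number `C`: `f(x₁,x₂,x₃,x₄)` is the
binary digit of `C` at position `8x₁ + 4x₂ + 2x₃ + x₄`. -/
def ruleOfCode (C : ℕ) (x : Fin 4 → Fin 2) : Fin 2 :=
  if C.testBit (8 * (x 0 : ℕ) + 4 * (x 1 : ℕ) + 2 * (x 2 : ℕ) + (x 3 : ℕ)) then 1 else 0

/-- The step function: `Θ(m) = 1` if `m > 0` and `Θ(m) = 0` otherwise. -/
def theta (m : ℤ) : ℤ := if 0 < m then 1 else 0

/-- The delta function: `δ_{m,n} = 1` if `m = n` and `δ_{m,n} = 0` otherwise. -/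
def deltaZ (m k : ℤ) : ℤ := if m = k then 1 else 0

/-!
A particle hops one site to the left exactly when the gap to its right neighbour is at most `2`.
By strict monotonicity this can be read off from the occupancy alone: the neighbour is within
distance `d` iff one of the `d` sites following the particle is occupied. So a site `n` is occupied
after the step iff either `n` was occupied and `n + 1`, `n + 2` were empty, or `n + 1` was occupied
and one of `n + 2`, `n + 3` was. This is the truth table of rule 58336.
-/

open Set

theorem range_inter_Ioc_nonempty_iff {α β : Type*} [LinearOrder α] [SuccOrder α] [NoMaxOrder α]
    [Preorder β] {s : α → β} (hs : StrictMono s) (a : α) (b : β) :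
    (range s ∩ Ioc (s a) b).Nonempty ↔ s (Order.succ a) ≤ b := by
  constructor
  · rintro ⟨_, ⟨c, rfl⟩, hac, hcb⟩
    exact (hs.monotone (Order.succ_le_of_lt (hs.lt_iff_lt.mp hac))).trans hcb
  · exact fun hb ↦ ⟨_, mem_range_self _, hs (Order.lt_succ a), hb⟩

theorem inter_Ioc_add_two_nonempty_iff (A : Set ℤ) (n : ℤ) :
    (A ∩ Ioc n (n + 2)).Nonempty ↔ n + 1 ∈ A ∨ n + 2 ∈ A := by
  have hIoc : Ioc n (n + 2) = {n + 1, n + 2} := by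
    ext m
    simp only [mem_Ioc, mem_insert_iff, mem_singleton_iff]
    omega
  simp only [hIoc, Set.Nonempty, mem_inter_iff, mem_insert_iff, mem_singleton_iff, and_or_left,
    exists_or, exists_eq_right]

/-- The particle mapping with threshold `d` on configurations `s`, where `s k` is the position of
the `k`-th particle: a particle moves one site to the left unless its right neighbour is more
than `d` sites away. Written with `theta` so that `d = 2` is literally the mapping of rule 58336. -/
def hopLeft (d : ℤ) (s : ℤ → ℤ) (k : ℤ) : ℤ :=
  s k - 1 + theta (s (k + 1) - s k - d)

section hopLeft

variable {d : ℤ} {s : ℤ → ℤ} {k : ℤ}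

theorem hopLeft_of_le (h : s (k + 1) ≤ s k + d) : hopLeft d s k = s k - 1 := by
  rw [hopLeft, theta, if_neg (by omega), add_zero]

theorem hopLeft_of_lt (h : s k + d < s (k + 1)) : hopLeft d s k = s k := by
  rw [hopLeft, theta, if_pos (by omega), sub_add_cancel]

theorem strictMono_hopLeft (d : ℤ) (hs : StrictMono s) : StrictMono (hopLeft d s) := by
  refine strictMono_int_of_lt_succ fun k ↦ ?_
  have hk : s k < s (k + 1) := hs (lt_add_one k)
  have hk' : s (k + 1) < s (k + 1 + 1) := hs (lt_add_one (k + 1))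
  rcases le_or_gt (s (k + 1)) (s k + d) with h | h <;>
    rcases le_or_gt (s (k + 1 + 1)) (s (k + 1) + d) with h' | h' <;>
    simp only [hopLeft_of_le, hopLeft_of_lt, h, h'] <;> omega

theorem mem_range_hopLeft_iff (hs : StrictMono s) (n : ℤ) :
    n ∈ range (hopLeft d s) ↔
      (n ∈ range s ∧ ¬(range s ∩ Ioc n (n + d)).Nonempty) ∨
        (n + 1 ∈ range s ∧ (range s ∩ Ioc (n + 1) (n + 1 + d)).Nonempty) := by
  have gap_le_iff (k : ℤ) :
      (range s ∩ Ioc (s k) (s k + d)).Nonempty ↔ s (k + 1) ≤ s k + d :=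
    range_inter_Ioc_nonempty_iff hs k _
  constructor
  · rintro ⟨k, rfl⟩
    rcases le_or_gt (s (k + 1)) (s k + d) with h | h
    · rw [hopLeft_of_le h, sub_add_cancel]
      exact .inr ⟨mem_range_self k, (gap_le_iff k).mpr h⟩
    · rw [hopLeft_of_lt h]
      exact .inl ⟨mem_range_self k, (gap_le_iff k).not.mpr h.not_ge⟩
  · rintro (⟨⟨k, rfl⟩, hempty⟩ | ⟨⟨k, hk⟩, hocc⟩)
    · exact ⟨k, hopLeft_of_lt (not_le.mp ((gap_le_iff k).not.mp hempty))⟩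
    · rw [← hk, gap_le_iff] at hocc
      exact ⟨k, by rw [hopLeft_of_le hocc, hk, add_sub_cancel_right]⟩

end hopLeft

theorem phi_eq_one_iff (s : ℤ → ℤ) (i : ℤ) : phi s i = 1 ↔ i ∈ range s := by
  simp [phi]

theorem ruleOfCode_58336_eq_one_iff (x : Fin 4 → Fin 2) :
    ruleOfCode 58336 x = 1 ↔
      (x 0 = 1 ∧ ¬(x 1 = 1 ∨ x 2 = 1)) ∨ (x 1 = 1 ∧ (x 2 = 1 ∨ x 3 = 1)) := by
  revert x
  decide

theorem phi_hopLeft_two {s : ℤ → ℤ} (hs : StrictMono s) (i : ℤ) :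
    phi (hopLeft 2 s) i = ruleOfCode 58336 (fun k : Fin 4 ↦ phi s (i + (k : ℕ))) := by
  have eq_of_eq_one_iff : ∀ a b : Fin 2, (a = 1 ↔ b = 1) → a = b := by decide
  apply eq_of_eq_one_iff
  rw [phi_eq_one_iff, mem_range_hopLeft_iff hs, ruleOfCode_58336_eq_one_iff]
  simp only [inter_Ioc_add_two_nonempty_iff, phi_eq_one_iff]
  norm_num [add_assoc]

/-- For the conservative 4-input rule with code number 58336 and the particle
mapping `g(x₀,x₁,x₂,x₃) = x₁ - 1 + Θ(x₂ - x₁ - 2)`: for every strictly increasing `s : ℤ → ℤ`,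
the bisequence `t = g_{∞,1}(s)`, `t i = g (s (i-1)) (s i) (s (i+1)) (s (i+2))`,
is strictly increasing and `φ(t) = f_∞(φ(s))`. -/
theorem stmt_16 (s : ℤ → ℤ) (hs : StrictMono s) :
    StrictMono (fun i : ℤ => s i - 1 + theta (s (i + 1) - s i - 2)) ∧
    ∀ i : ℤ,
      phi (fun i : ℤ => s i - 1 + theta (s (i + 1) - s i - 2)) i =
        ruleOfCode 58336 (fun k : Fin 4 => phi s (i + (k : ℕ))) :=
  ⟨strictMono_hopLeft 2 hs, phi_hopLeft_two hs⟩
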